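/- arXiv:math/0512624 — 3 statements merged into one kernel-verified Lean document; each statement's English description precedes it below -/
import Mathlib

section
/- For all natural numbers k and n, the integral ∫_0^∞ z^k · L_n(z) · e^{-z} dz equals (-1)^n · C(k,n) · k! if k ≥ n, and equals 0 if k < n, where C(k,n) is the binomial coefficient. -/
open MeasureTheory

/-- The `n`-th Laguerre polynomial, `L n x = ∑_{j=0}^n (-1)^j C(n,j) x^j / j!`. -/
noncomputable def laguerre (n : ℕ) (x : ℝ) : ℝ :=
  ∑ j ∈ Finset.range (n + 1), (-1 : ℝ) ^ j * (n.choose j) * x ^ j / (j.factorial)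

/-!
Since `∫ z ^ m * exp (-z) = m!`, integrating `laguerre n` term by term against `z ^ k * exp (-z)`
gives `k!` times `∑ j, (-1) ^ j * C(n, j) * C(k + j, k)`. Up to the sign `(-1) ^ n`, this sum is the
`n`-th forward difference of `x ↦ C(x, k)` at `x = k`, and each difference lowers the lower index
of the binomial coefficient by one, leaving `C(k, k - n)`, or `0` once `n > k`.
-/

open Finset Function fwdDiff
open scoped Nat

theorem fwdDiff_iter_choose_of_le {n k : ℕ} (h : n ≤ k) :
    Δ_[1] ^[n] (fun x ↦ x.choose k : ℕ → ℤ) = fun x ↦ (x.choose (k - n) : ℤ) := by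
  simpa only [Nat.add_sub_cancel' h] using fwdDiff_iter_choose (k - n) n

theorem fwdDiff_iter_choose_of_lt {n k : ℕ} (h : k < n) :
    Δ_[1] ^[n] (fun x ↦ x.choose k : ℕ → ℤ) = 0 := by
  obtain ⟨m, rfl⟩ := Nat.exists_eq_add_of_lt h
  have iter_k : Δ_[1] ^[k] (fun x ↦ x.choose k : ℕ → ℤ) = fun _ ↦ 1 := by
    simpa using fwdDiff_iter_choose_of_le le_rfl
  have iter_zero : Δ_[1] ^[m] (0 : ℕ → ℤ) = 0 := iterate_fixed (fwdDiff_const 1 0) m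
  rw [show k + m + 1 = m + 1 + k by ring, iterate_add_apply, iter_k, iterate_succ_apply,
    fwdDiff_const]
  exact iter_zero

theorem sum_range_neg_one_pow_mul_choose_smul_eq_fwdDiff_iter {M G : Type*} [AddCommMonoid M]
    [AddCommGroup G] (h : M) (f : M → G) (n : ℕ) (y : M) :
    ∑ j ∈ range (n + 1), ((-1 : ℤ) ^ j * n.choose j) • f (y + j • h) =
      (-1 : ℤ) ^ n • Δ_[h] ^[n] f y := by
  rw [fwdDiff_iter_eq_sum_shift, smul_sum]
  refine sum_congr rfl fun j hj ↦ ?_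
  have sign : (-1 : ℤ) ^ j = (-1) ^ n * (-1) ^ (n - j) := by
    obtain ⟨m, rfl⟩ := Nat.exists_eq_add_of_le (mem_range_succ_iff.mp hj)
    rw [Nat.add_sub_cancel_left, pow_add, mul_assoc, ← pow_add, (Even.add_self m).neg_one_pow,
      mul_one]
  rw [sign, mul_assoc, mul_smul]

theorem sum_range_neg_one_pow_mul_choose_mul_add_choose {R : Type*} [Ring R] (n k a : ℕ) :
    ∑ j ∈ range (n + 1), (-1 : R) ^ j * n.choose j * (a + j).choose k =
      if n ≤ k then (-1) ^ n * (a.choose (k - n) : R) else 0 := by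
  have sum_int : ∑ j ∈ range (n + 1), (-1 : ℤ) ^ j * n.choose j * (a + j).choose k =
      (-1) ^ n * Δ_[1] ^[n] (fun x ↦ x.choose k : ℕ → ℤ) a := by
    simpa only [smul_eq_mul, mul_one] using
      sum_range_neg_one_pow_mul_choose_smul_eq_fwdDiff_iter 1 (fun x ↦ (x.choose k : ℤ)) n a
  have sum_cast := congrArg (Int.cast : ℤ → R) sum_int
  push_cast at sum_cast
  rw [sum_cast]
  split_ifs with h
  · simp [fwdDiff_iter_choose_of_le h]
  · simp [fwdDiff_iter_choose_of_lt (not_le.mp h)]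

theorem integrableOn_pow_mul_exp_neg_Ioi (m : ℕ) :
    IntegrableOn (fun z : ℝ ↦ z ^ m * Real.exp (-z)) (Set.Ioi 0) := by
  simpa [mul_comm] using Real.GammaIntegral_convergent m.cast_add_one_pos

theorem integral_pow_mul_exp_neg_Ioi (m : ℕ) :
    ∫ z in Set.Ioi (0 : ℝ), z ^ m * Real.exp (-z) = m ! := by
  simpa [mul_comm, Real.Gamma_nat_eq_factorial] using
    (Real.Gamma_eq_integral (m.cast_add_one_pos (α := ℝ))).symm

theorem integral_sum_mul_pow_mul_exp_neg_Ioi {ι : Type*} (s : Finset ι) (c : ι → ℝ) (m : ι → ℕ) :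
    ∫ z in Set.Ioi (0 : ℝ), (∑ i ∈ s, c i * z ^ m i) * Real.exp (-z) = ∑ i ∈ s, c i * (m i)! := by
  simp_rw [sum_mul, mul_assoc]
  rw [integral_finsetSum _ fun i _ ↦ (integrableOn_pow_mul_exp_neg_Ioi (m i)).const_mul (c i)]
  simp_rw [integral_const_mul, integral_pow_mul_exp_neg_Ioi]

theorem pow_mul_laguerre (k n : ℕ) (z : ℝ) :
    z ^ k * laguerre n z =
      ∑ j ∈ range (n + 1), (-1) ^ j * n.choose j / j ! * z ^ (k + j) := by
  rw [laguerre, mul_sum]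
  exact sum_congr rfl fun j _ ↦ by ring

/-- Fourier–Laguerre coefficients of the powers `z^k`. -/
theorem pow_laguerre_integral (k n : ℕ) :
    ∫ z in Set.Ioi (0 : ℝ), z ^ k * laguerre n z * Real.exp (-z) =
      if n ≤ k then (-1 : ℝ) ^ n * (k.choose n : ℝ) * (k.factorial : ℝ) else 0 := by
  calc ∫ z in Set.Ioi (0 : ℝ), z ^ k * laguerre n z * Real.exp (-z)
      = ∑ j ∈ range (n + 1), (-1 : ℝ) ^ j * n.choose j / j ! * (k + j)! := by
        simp_rw [pow_mul_laguerre, integral_sum_mul_pow_mul_exp_neg_Ioi]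
    _ = (∑ j ∈ range (n + 1), (-1 : ℝ) ^ j * n.choose j * (k + j).choose k) * k ! := by
        rw [sum_mul]
        refine sum_congr rfl fun j _ ↦ ?_
        rw [Nat.cast_add_choose]
        field_simp
    _ = if n ≤ k then (-1 : ℝ) ^ n * (k.choose n : ℝ) * (k.factorial : ℝ) else 0 := by
        rw [sum_range_neg_one_pow_mul_choose_mul_add_choose, ite_mul, zero_mul]
        exact if_ctx_congr Iff.rfl (fun h ↦ by rw [Nat.choose_symm h]) fun _ ↦ rfl
end

section
/- (The quantum expected energy equals the classical energy.) For every real λ with 0 < λ < 1/2 and every real μ ≥ 0, the series Σ_{n=0}^∞ (n+λ) · π_n^{(λ)}(μ) converges absolutely and its sum equals μ. -/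
/-- The quantum state function `π_n^{(λ)}` of the `λ`-quantization. -/
noncomputable def piQuant (lam : ℝ) (n : ℕ) (μ : ℝ) : ℝ :=
  (1 / (1 - lam)) * (-lam / (1 - lam)) ^ n * laguerre n (μ / (lam * (1 - lam))) *
    Real.exp (-μ / (1 - lam))

/-!
Write `t = -λ / (1 - λ)`, so that `1 - t = 1 / (1 - λ)` and `|t| < 1` exactly when `λ < 1 / 2`.
Interchanging the two summations in `∑ₙ tⁿ ∑ⱼ C(n + k, j + k) aⱼ` gives
`(1 - t)⁻ᵏ⁻¹ ∑ⱼ aⱼ (t / (1 - t))ʲ`. The case `k = 0`, `aⱼ = (-x)ʲ / j!` is the generating function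
of the Laguerre polynomials; since `(n + 1) C(n, j) = (j + 1) C(n + 1, j + 1)`, the case `k = 1`,
`aⱼ = (j + 1) (-x)ʲ / j!` is the one of `(n + 1) Lₙ(x)`. At `x = μ / (λ (1 - λ))` they say
`∑ₙ πₙ = 1` and `∑ₙ (n + 1) πₙ = μ + (1 - λ)`, and `n + λ = (n + 1) - (1 - λ)`.
-/

open Finset

section BinomialTransform

variable {𝕜 : Type*} [NormedField 𝕜] {t : 𝕜}

theorem hasSum_choose_add_mul_pow (j k : ℕ) (ht : ‖t‖ < 1) :
    HasSum (fun n : ℕ ↦ ((n + k).choose (j + k) : 𝕜) * t ^ n)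
      ((t / (1 - t)) ^ j / (1 - t) ^ (k + 1)) := by
  have initial_sum_eq_zero : ∑ n ∈ range j, ((n + k).choose (j + k) : 𝕜) * t ^ n = 0 :=
    sum_eq_zero fun n hn ↦ by
      rw [Nat.choose_eq_zero_of_lt (Nat.add_lt_add_right (mem_range.1 hn) k), Nat.cast_zero,
        zero_mul]
  rw [← hasSum_nat_add_iff' j, initial_sum_eq_zero, sub_zero]
  convert! (hasSum_choose_mul_geometric_of_norm_lt_one (j + k) ht).mul_left (t ^ j) using 1
  · ext n
    rw [add_assoc n j k, pow_add]
    ring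
  · rw [div_pow, div_div, ← pow_add, mul_one_div, add_assoc]

variable [CompleteSpace 𝕜]

theorem summable_mul_choose_add_mul_pow {a : ℕ → 𝕜} (k : ℕ) (ht : ‖t‖ < 1)
    (ha : Summable fun j ↦ ‖a j‖ * (‖t‖ / (1 - ‖t‖)) ^ j) :
    Summable fun p : ℕ × ℕ ↦ a p.1 * (((p.2 + k).choose (p.1 + k) : 𝕜) * t ^ p.2) := by
  have row (j : ℕ) := (hasSum_choose_add_mul_pow j k
    ((norm_norm t).trans_lt ht)).mul_left ‖a j‖
  have majorant_summable : Summable fun p : ℕ × ℕ ↦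
      ‖a p.1‖ * (((p.2 + k).choose (p.1 + k) : ℝ) * ‖t‖ ^ p.2) := by
    rw [summable_prod_of_nonneg fun p ↦ by positivity]
    refine ⟨fun j ↦ (row j).summable, ?_⟩
    simp only [(row _).tsum_eq, ← mul_div_assoc]
    exact ha.div_const _
  refine majorant_summable.of_norm_bounded fun p ↦ ?_
  rw [norm_mul, norm_mul, norm_pow]
  gcongr
  simpa using Nat.norm_cast_le (α := 𝕜) ((p.2 + k).choose (p.1 + k))

theorem hasSum_pow_mul_sum_choose_add_mul {a : ℕ → 𝕜} {s : 𝕜} (k : ℕ) (ht : ‖t‖ < 1)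
    (ha : Summable fun j ↦ ‖a j‖ * (‖t‖ / (1 - ‖t‖)) ^ j)
    (hs : HasSum (fun j ↦ a j * (t / (1 - t)) ^ j) s) :
    HasSum (fun n ↦ t ^ n * ∑ j ∈ range (n + 1), ((n + k).choose (j + k) : 𝕜) * a j)
      (s / (1 - t) ^ (k + 1)) := by
  have double_sum := (summable_mul_choose_add_mul_pow k ht ha).hasSum
  have sum_by_rows := double_sum.prod_fiberwise fun j ↦
    (hasSum_choose_add_mul_pow j k ht).mul_left (a j)
  simp only [← mul_div_assoc] at sum_by_rows
  rw [sum_by_rows.unique (hs.div_const _)] at double_sum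
  refine ((Equiv.prodComm ℕ ℕ).hasSum_iff.2 double_sum).prod_fiberwise fun n ↦ ?_
  have terms_vanish : ∀ j ∉ range (n + 1),
      a j * (((n + k).choose (j + k) : 𝕜) * t ^ n) = 0 := fun j hj ↦ by
    have hnj : n < j := by simpa [Nat.lt_succ_iff] using hj
    simp [Nat.choose_eq_zero_of_lt (Nat.add_lt_add_right hnj k)]
  have column_sum := hasSum_sum_of_ne_finset_zero (L := .unconditional ℕ) terms_vanish
  convert! column_sum using 1
  rw [mul_sum]
  exact sum_congr rfl fun j _ ↦ by ring

end BinomialTransform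

theorem hasSum_add_one_mul_pow_div_factorial {𝕜 : Type*} [NormedField 𝕜] [NormedAlgebra ℚ 𝕜]
    [CompleteSpace 𝕜] (z : 𝕜) :
    HasSum (fun j : ℕ ↦ ((j : 𝕜) + 1) * (z ^ j / j.factorial))
      ((z + 1) * NormedSpace.exp z) := by
  have : CharZero 𝕜 := algebraRat.charZero 𝕜
  have exp_series := NormedSpace.expSeries_div_hasSum_exp z
  have shifted_series :
      HasSum (fun j : ℕ ↦ (j : 𝕜) * (z ^ j / j.factorial)) (z * NormedSpace.exp z) := by
    rw [← hasSum_nat_add_iff' 1]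
    convert! exp_series.mul_left z using 1
    · ext j
      rw [Nat.factorial_succ]
      push_cast
      have : (j.factorial : 𝕜) ≠ 0 := by exact_mod_cast j.factorial_ne_zero
      have : (j : 𝕜) + 1 ≠ 0 := by exact_mod_cast j.succ_ne_zero
      field_simp
      ring
    · simp
  simpa only [add_mul, one_mul] using shifted_series.add exp_series

theorem laguerre_eq_sum (n : ℕ) (x : ℝ) :
    laguerre n x = ∑ j ∈ range (n + 1), (n.choose j : ℝ) * ((-x) ^ j / j.factorial) :=
  sum_congr rfl fun j _ ↦ by rw [neg_pow]; ring

theorem add_one_mul_laguerre (n : ℕ) (x : ℝ) :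
    ((n : ℝ) + 1) * laguerre n x =
      ∑ j ∈ range (n + 1),
        ((n + 1).choose (j + 1) : ℝ) * (((j : ℝ) + 1) * ((-x) ^ j / j.factorial)) := by
  rw [laguerre_eq_sum, mul_sum]
  refine sum_congr rfl fun j _ ↦ ?_
  have absorption : ((n : ℝ) + 1) * n.choose j = (n + 1).choose (j + 1) * ((j : ℝ) + 1) := by
    exact_mod_cast Nat.add_one_mul_choose_eq n j
  rw [← mul_assoc, absorption, mul_assoc]

section LaguerreGeneratingFunction

variable {t : ℝ}

theorem hasSum_pow_mul_laguerre (ht : |t| < 1) (x : ℝ) :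
    HasSum (fun n ↦ t ^ n * laguerre n x) ((1 - t)⁻¹ * Real.exp (-x * (t / (1 - t)))) := by
  have exp_series (y r : ℝ) :
      HasSum (fun j : ℕ ↦ y ^ j / j.factorial * r ^ j) (Real.exp (y * r)) := by
    simpa only [Real.exp_eq_exp_ℝ, mul_pow, mul_div_right_comm] using
      NormedSpace.expSeries_div_hasSum_exp (y * r)
  have := hasSum_pow_mul_sum_choose_add_mul 0 ht (a := fun j ↦ (-x) ^ j / j.factorial)
    (by simpa using (exp_series |x| (|t| / (1 - |t|))).summable) (exp_series (-x) (t / (1 - t)))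
  simpa [laguerre_eq_sum, inv_mul_eq_div] using this

theorem hasSum_pow_mul_add_one_mul_laguerre (ht : |t| < 1) (x : ℝ) :
    HasSum (fun n : ℕ ↦ t ^ n * (((n : ℝ) + 1) * laguerre n x))
      ((-x * (t / (1 - t)) + 1) / (1 - t) ^ 2 * Real.exp (-x * (t / (1 - t)))) := by
  have weighted_exp_series (y r : ℝ) :
      HasSum (fun j : ℕ ↦ ((j : ℝ) + 1) * (y ^ j / j.factorial) * r ^ j)
        ((y * r + 1) * Real.exp (y * r)) := by
    simpa only [Real.exp_eq_exp_ℝ, mul_pow, mul_div_right_comm, mul_assoc] using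
      hasSum_add_one_mul_pow_div_factorial (y * r)
  simp only [add_one_mul_laguerre, div_mul_eq_mul_div]
  refine hasSum_pow_mul_sum_choose_add_mul 1 ht ?_ (weighted_exp_series (-x) (t / (1 - t)))
  have norm_weight (j : ℕ) : ‖(j : ℝ) + 1‖ = j + 1 := Real.norm_of_nonneg (by positivity)
  simpa [norm_weight] using (weighted_exp_series |x| (|t| / (1 - |t|))).summable

end LaguerreGeneratingFunction

section QuantizationParameter

theorem abs_neg_div_one_sub_lt_one {K : Type*} [Field K] [LinearOrder K] [IsStrictOrderedRing K]
    {r : K} (hr : r < 1 / 2) : |-r / (1 - r)| < 1 := by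
  have one_sub_pos : 0 < 1 - r := by linarith
  rw [abs_div, abs_neg, abs_of_pos one_sub_pos, div_lt_one one_sub_pos, abs_lt]
  constructor <;> linarith

variable {K : Type*} [Field K] {r : K}

theorem one_sub_neg_div_one_sub (hr : r ≠ 1) : 1 - -r / (1 - r) = (1 - r)⁻¹ := by
  have : 1 - r ≠ 0 := sub_ne_zero.2 hr.symm
  field_simp
  ring

theorem neg_div_one_sub_div_one_sub (hr : r ≠ 1) :
    -r / (1 - r) / (1 - -r / (1 - r)) = -r := by
  rw [one_sub_neg_div_one_sub hr, div_inv_eq_mul, div_mul_cancel₀ _ (sub_ne_zero.2 hr.symm)]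

theorem neg_div_mul_mul_neg (hr : r ≠ 0) (x y : K) : -(x / (r * y)) * -r = x / y := by
  rw [neg_mul_neg, div_mul_eq_mul_div, mul_comm x, mul_div_mul_left _ _ hr]

end QuantizationParameter

section QuantumStates

variable {lam : ℝ}

theorem hasSum_mul_piQuant {w : ℕ → ℝ} {c μ : ℝ}
    (h : HasSum (fun n ↦ (-lam / (1 - lam)) ^ n * (w n * laguerre n (μ / (lam * (1 - lam)))))
      (c * Real.exp (μ / (1 - lam)))) :
    HasSum (fun n ↦ w n * piQuant lam n μ) (c / (1 - lam)) := by
  convert! h.mul_left (1 / (1 - lam) * Real.exp (-μ / (1 - lam))) using 1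
  · ext n
    rw [piQuant]
    ring
  · rw [neg_div, Real.exp_neg]
    field_simp

theorem hasSum_piQuant (hlam0 : lam ≠ 0) (hlam1 : lam < 1 / 2) (μ : ℝ) :
    HasSum (fun n ↦ piQuant lam n μ) 1 := by
  have lam_ne_one : lam ≠ 1 := by linarith
  have one_sub_ne_zero : 1 - lam ≠ 0 := sub_ne_zero.2 lam_ne_one.symm
  have generating_function := hasSum_pow_mul_laguerre (abs_neg_div_one_sub_lt_one hlam1)
    (μ / (lam * (1 - lam)))
  rw [neg_div_one_sub_div_one_sub lam_ne_one, one_sub_neg_div_one_sub lam_ne_one, inv_inv,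
    neg_div_mul_mul_neg hlam0] at generating_function
  have total_mass : HasSum (fun n ↦ 1 * piQuant lam n μ) ((1 - lam) / (1 - lam)) :=
    hasSum_mul_piQuant (by simpa only [one_mul] using generating_function)
  simpa only [one_mul, div_self one_sub_ne_zero] using total_mass

theorem hasSum_add_one_mul_piQuant (hlam0 : lam ≠ 0) (hlam1 : lam < 1 / 2) (μ : ℝ) :
    HasSum (fun n : ℕ ↦ ((n : ℝ) + 1) * piQuant lam n μ) (μ + (1 - lam)) := by
  have lam_ne_one : lam ≠ 1 := by linarith
  have one_sub_ne_zero : 1 - lam ≠ 0 := sub_ne_zero.2 lam_ne_one.symm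
  have generating_function := hasSum_pow_mul_add_one_mul_laguerre
    (abs_neg_div_one_sub_lt_one hlam1) (μ / (lam * (1 - lam)))
  rw [neg_div_one_sub_div_one_sub lam_ne_one, one_sub_neg_div_one_sub lam_ne_one,
    neg_div_mul_mul_neg hlam0] at generating_function
  convert! hasSum_mul_piQuant generating_function using 1
  field_simp

end QuantumStates

theorem piQuant_expected_energy_general (lam : ℝ) (hlam0 : lam ≠ 0) (hlam1 : lam < 1 / 2) (μ : ℝ) :
    Summable (fun n : ℕ ↦ |((n : ℝ) + lam) * piQuant lam n μ|) ∧
      HasSum (fun n : ℕ ↦ ((n : ℝ) + lam) * piQuant lam n μ) μ := by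
  suffices energy : HasSum (fun n : ℕ ↦ ((n : ℝ) + lam) * piQuant lam n μ) μ from
    ⟨energy.summable.abs, energy⟩
  convert! (hasSum_add_one_mul_piQuant hlam0 hlam1 μ).sub
    ((hasSum_piQuant hlam0 hlam1 μ).mul_left (1 - lam)) using 1
  · ext n
    ring
  · ring

/-- The quantum expected energy equals the classical energy. -/
theorem piQuant_expected_energy (lam : ℝ) (hlam0 : 0 < lam) (hlam1 : lam < 1 / 2)
    (μ : ℝ) (hμ : 0 ≤ μ) :
    Summable (fun n : ℕ => |((n : ℝ) + lam) * piQuant lam n μ|) ∧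
      HasSum (fun n : ℕ => ((n : ℝ) + lam) * piQuant lam n μ) μ :=
  piQuant_expected_energy_general lam hlam0.ne' hlam1 μ
end

section
/- (Closed form of the star exponential as a Fourier–Dirichlet series.) For every real λ with 0 < λ < 1/2, every real μ ≥ 0 and every real θ, the series Σ_{n=0}^∞ π_n^{(λ)}(μ) · e^{-i(n+λ)θ} converges absolutely and equals e^{-iλθ} / (1-λ+λe^{-iθ}) · exp( μ·(e^{-iθ}-1) / (1-λ+λe^{-iθ}) ), the denominator 1-λ+λe^{-iθ} being nonzero. -/
/-!
The binomial transform `b n = ∑ j ≤ n, C(n, j) a j` acts on generating functions by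
`∑ b n tⁿ = (1 - t)⁻¹ ∑ a j (t / (1 - t))ʲ`: exchange the two sums and use
`∑ₙ C(n, j) tⁿ = tʲ / (1 - t)ʲ⁺¹`. Laguerre polynomials are the binomial transform of the
exponential coefficients `(-x)ʲ / j!`, so their generating function is
`(1 - t)⁻¹ exp (-x t / (1 - t))`. At `t = -λz / (1 - λ)` and `x = μ / (λ(1 - λ))` this is the
power series of the `π_n` in `z = e^{-iθ}`, and the condition `|t| < 1` reads `|λz| < |1 - λ|`.
-/

open Finset Complex

theorem hasSum_sum_antidiagonal {A α : Type*} [AddMonoid A] [HasAntidiagonal A]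
    [AddCommMonoid α] [TopologicalSpace α] [ContinuousAdd α] [RegularSpace α]
    {f : A × A → α} {s : α} (hf : HasSum f s) :
    HasSum (fun n ↦ ∑ p ∈ antidiagonal n, f p) s := by
  have h_sigma := (HasAntidiagonal.sigmaAntidiagonalEquivProd.hasSum_iff.2 hf).sigma
    fun n ↦ hasSum_fintype _
  exact h_sigma.congr_fun fun n ↦ (sum_coe_sort (antidiagonal n) f).symm

/-- The binomial (Euler) transform `n ↦ ∑ j ≤ n, C(n, j) a j` of a sequence `a`, of which the
Laguerre polynomials are an instance. -/
def binomialTransform {R : Type*} [Semiring R] (a : ℕ → R) (n : ℕ) : R :=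
  ∑ j ∈ range (n + 1), (n.choose j : R) * a j

theorem binomialTransform_mul_pow {R : Type*} [CommSemiring R] (a : ℕ → R) (t : R) (n : ℕ) :
    binomialTransform a n * t ^ n =
      ∑ p ∈ antidiagonal n, a p.1 * (((p.2 + p.1).choose p.1 : R) * t ^ (p.2 + p.1)) := by
  rw [Nat.sum_antidiagonal_eq_sum_range_succ_mk, binomialTransform, sum_mul]
  refine sum_congr rfl fun j hj ↦ ?_
  rw [Nat.sub_add_cancel (mem_range_succ_iff.1 hj)]
  ring

section BinomialTransform

variable {𝕜 : Type*} [NormedField 𝕜] {a : ℕ → 𝕜} {t : 𝕜}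

theorem hasSum_choose_mul_pow_add (j : ℕ) (ht : ‖t‖ < 1) :
    HasSum (fun m ↦ ((m + j).choose j : 𝕜) * t ^ (m + j)) ((t / (1 - t)) ^ j / (1 - t)) := by
  convert! (hasSum_choose_mul_geometric_of_norm_lt_one j ht).mul_right (t ^ j) using 1
  · simp only [pow_add, mul_assoc]
  · rw [one_div_mul_eq_div, div_pow, div_div, pow_succ]

variable [CompleteSpace 𝕜]

theorem summable_mul_choose_mul_pow_add (ht : ‖t‖ < 1)
    (ha : Summable fun j ↦ ‖a j‖ * (‖t‖ / (1 - ‖t‖)) ^ j) :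
    Summable fun p : ℕ × ℕ ↦ a p.1 * (((p.2 + p.1).choose p.1 : 𝕜) * t ^ (p.2 + p.1)) := by
  have h_column (j : ℕ) :
      HasSum (fun m ↦ ‖a j‖ * (((m + j).choose j : ℝ) * ‖t‖ ^ (m + j)))
        (‖a j‖ * ((‖t‖ / (1 - ‖t‖)) ^ j / (1 - ‖t‖))) :=
    (hasSum_choose_mul_pow_add (t := ‖t‖) j (by rwa [norm_norm])).mul_left _
  have h_majorant : Summable fun p : ℕ × ℕ ↦
      ‖a p.1‖ * (((p.2 + p.1).choose p.1 : ℝ) * ‖t‖ ^ (p.2 + p.1)) := by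
    refine (summable_prod_of_nonneg fun p ↦ by positivity).2
      ⟨fun j ↦ (h_column j).summable, ?_⟩
    exact (ha.div_const (1 - ‖t‖)).congr fun j ↦ by rw [(h_column j).tsum_eq, mul_div_assoc]
  refine h_majorant.of_norm_bounded fun p ↦ ?_
  rw [norm_mul, norm_mul, norm_pow]
  gcongr
  simpa using Nat.norm_cast_le (α := 𝕜) ((p.2 + p.1).choose p.1)

theorem hasSum_binomialTransform_mul_pow {s : 𝕜} (ht : ‖t‖ < 1)
    (ha : Summable fun j ↦ ‖a j‖ * (‖t‖ / (1 - ‖t‖)) ^ j)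
    (hs : HasSum (fun j ↦ a j * (t / (1 - t)) ^ j) s) :
    HasSum (fun n ↦ binomialTransform a n * t ^ n) (s / (1 - t)) := by
  have h_double := (summable_mul_choose_mul_pow_add ht ha).hasSum
  have h_columns := h_double.prod_fiberwise fun j ↦ (hasSum_choose_mul_pow_add j ht).mul_left (a j)
  simp only [← mul_div_assoc] at h_columns
  rw [h_columns.unique (hs.div_const (1 - t))] at h_double
  simpa only [binomialTransform_mul_pow] using hasSum_sum_antidiagonal h_double

end BinomialTransform

theorem ofReal_laguerre (n : ℕ) (x : ℝ) :
    (laguerre n x : ℂ) = binomialTransform (fun j ↦ (-x : ℂ) ^ j / j.factorial) n := by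
  rw [laguerre, binomialTransform]
  push_cast
  refine sum_congr rfl fun j _ ↦ ?_
  rw [neg_pow (x : ℂ)]
  ring

theorem hasSum_laguerre_mul_pow (x : ℝ) {t : ℂ} (ht : ‖t‖ < 1) :
    HasSum (fun n ↦ (laguerre n x : ℂ) * t ^ n) (exp (-x * (t / (1 - t))) / (1 - t)) := by
  simp only [ofReal_laguerre]
  refine hasSum_binomialTransform_mul_pow ht ?_ ?_
  · refine (Real.summable_pow_div_factorial (|x| * (‖t‖ / (1 - ‖t‖)))).congr fun j ↦ ?_
    rw [norm_div, norm_pow, norm_neg, norm_real, norm_natCast, Real.norm_eq_abs, mul_pow]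
    ring
  · have h_exp := NormedSpace.expSeries_div_hasSum_exp (-x * (t / (1 - t)) : ℂ)
    rw [← exp_eq_exp_ℂ] at h_exp
    refine h_exp.congr_fun fun j ↦ ?_
    rw [mul_pow]
    ring

theorem add_ne_zero_of_norm_lt_norm {E : Type*} [SeminormedAddGroup E] {v w : E} (h : ‖w‖ < ‖v‖) :
    v + w ≠ 0 := fun h_zero ↦
  h.ne' (by rw [eq_neg_of_add_eq_zero_left h_zero, norm_neg])

theorem hasSum_piQuant_mul_pow {lam : ℝ} (hlam : lam ≠ 0) (μ : ℝ) {z : ℂ}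
    (hz : ‖(lam : ℂ) * z‖ < ‖(1 - lam : ℂ)‖) :
    HasSum (fun n ↦ (piQuant lam n μ : ℂ) * z ^ n)
      (exp (μ * (z - 1) / (1 - lam + lam * z)) / (1 - lam + lam * z)) := by
  have hlam' : (lam : ℂ) ≠ 0 := ofReal_ne_zero.2 hlam
  have h_one_sub : (1 - lam : ℂ) ≠ 0 := norm_pos_iff.1 ((norm_nonneg _).trans_lt hz)
  -- `field_simp` puts the product in the order `z * lam`.
  have h_den : (1 - lam + z * lam : ℂ) ≠ 0 :=
    add_ne_zero_of_norm_lt_norm (by rwa [mul_comm z])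
  set t : ℂ := -lam / (1 - lam) * z with ht_def
  have ht : ‖t‖ < 1 := by
    rwa [ht_def, div_mul_eq_mul_div, norm_div, neg_mul, norm_neg,
      div_lt_one (norm_pos_iff.2 h_one_sub)]
  have h_one_sub_t : 1 - t = (1 - lam + lam * z) / (1 - lam) := by
    rw [ht_def]
    field_simp
    ring
  have h_exponent : (μ * (z - 1) / (1 - lam + lam * z) : ℂ) =
      -μ / (1 - lam) + -(μ / (lam * (1 - lam)) : ℝ) * (t / (1 - t)) := by
    rw [h_one_sub_t, ht_def]
    push_cast
    field_simp
    ring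
  convert! (hasSum_laguerre_mul_pow (μ / (lam * (1 - lam))) ht).mul_left
    (1 / (1 - lam) * exp (-μ / (1 - lam)) : ℂ) using 1
  · funext n
    rw [piQuant, ht_def, mul_pow]
    push_cast
    ring
  · rw [h_exponent, exp_add, h_one_sub_t]
    field_simp

theorem starExp_closed_form_general {lam : ℝ} (hlam : lam ≠ 0) (μ : ℝ) {θ : ℂ}
    (hθ : ‖(lam : ℂ) * exp (-I * θ)‖ < ‖(1 - lam : ℂ)‖) :
    (1 - (lam : ℂ) + (lam : ℂ) * exp (-I * θ)) ≠ 0 ∧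
    Summable (fun n : ℕ ↦ ‖(piQuant lam n μ : ℂ) * exp (-I * ((n : ℂ) + lam) * θ)‖) ∧
    HasSum (fun n : ℕ ↦ (piQuant lam n μ : ℂ) * exp (-I * ((n : ℂ) + lam) * θ))
      (exp (-I * lam * θ) / (1 - (lam : ℂ) + (lam : ℂ) * exp (-I * θ)) *
        exp ((μ : ℂ) * (exp (-I * θ) - 1) / (1 - (lam : ℂ) + (lam : ℂ) * exp (-I * θ)))) := by
  have h_phase (n : ℕ) :
      exp (-I * ((n : ℂ) + lam) * θ) = exp (-I * lam * θ) * exp (-I * θ) ^ n := by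
    rw [← exp_nat_mul, ← exp_add]
    ring_nf
  have h_sum := (hasSum_piQuant_mul_pow hlam μ hθ).mul_left (exp (-I * lam * θ))
  rw [mul_div_left_comm, mul_comm (exp (_ / _))] at h_sum
  simp only [mul_left_comm (exp (-I * lam * θ)), ← h_phase] at h_sum
  exact ⟨add_ne_zero_of_norm_lt_norm hθ, h_sum.summable.norm, h_sum⟩

theorem norm_mul_exp_neg_I_mul_lt {lam : ℝ} (hlam : lam < 1 / 2) (θ : ℝ) :
    ‖(lam : ℂ) * exp (-I * θ)‖ < ‖(1 - lam : ℂ)‖ := by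
  have h_phase : ‖exp (-I * θ)‖ = 1 := by simp [norm_exp]
  have h_lt : |lam| < 1 - lam := abs_lt.2 ⟨by linarith, by linarith⟩
  rw [norm_mul, h_phase, mul_one, norm_real, Real.norm_eq_abs, ← ofReal_one, ← ofReal_sub,
    norm_real]
  exact h_lt.trans_le (le_abs_self _)

/-- Closed form of the star exponential as a Fourier–Dirichlet series. -/
theorem starExp_closed_form (lam : ℝ) (hlam0 : 0 < lam) (hlam1 : lam < 1 / 2)
    (μ : ℝ) (hμ : 0 ≤ μ) (θ : ℝ) :
    (1 - (lam : ℂ) + (lam : ℂ) * Complex.exp (-Complex.I * θ)) ≠ 0 ∧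
    Summable (fun n : ℕ =>
      ‖(piQuant lam n μ : ℂ) * Complex.exp (-Complex.I * ((n : ℂ) + lam) * θ)‖) ∧
    HasSum
      (fun n : ℕ => (piQuant lam n μ : ℂ) * Complex.exp (-Complex.I * ((n : ℂ) + lam) * θ))
      (Complex.exp (-Complex.I * lam * θ) /
          (1 - (lam : ℂ) + (lam : ℂ) * Complex.exp (-Complex.I * θ)) *
        Complex.exp ((μ : ℂ) * (Complex.exp (-Complex.I * θ) - 1) /
          (1 - (lam : ℂ) + (lam : ℂ) * Complex.exp (-Complex.I * θ)))) :=
  starExp_closed_form_general hlam0.ne' μ (norm_mul_exp_neg_I_mul_lt hlam1 θ)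
end
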